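/- Let d ≥ 1, let H_B and H_R be finite-dimensional complex Hilbert spaces, and let ψ ∈ ℂ^d ⊗ H_B ⊗ H_R be a unit vector. If there exists a POVM (Λ_z)_{z=0}^{d−1} on H_B with perfect guessing probability, ∑_z ⟨ψ| (|z⟩⟨z| ⊗ Λ_z ⊗ 1_R) |ψ⟩ = 1, then the X-measured classical-quantum marginal is exactly the ideal key state: ψ̄_X^{AR} = (1/d) 1_A ⊗ ψ^R. In particular, each X-measurement outcome probability ‖(⟨x̃| ⊗ 1_{BR}) ψ‖² equals 1/d. -/

import Mathlib

open Matrix BigOperators Finset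
open scoped Classical ComplexOrder

noncomputable section

/-- The positive semidefinite square root of a matrix (zero if the matrix is not PSD). -/
def psdSqrt {ι : Type*} [Fintype ι] [DecidableEq ι] (M : Matrix ι ι ℂ) : Matrix ι ι ℂ :=
  if h : M.PosSemidef then
    (h.1.eigenvectorUnitary : Matrix ι ι ℂ) *
      Matrix.diagonal (fun i => ((Real.sqrt (h.1.eigenvalues i) : ℝ) : ℂ)) *
      (star h.1.eigenvectorUnitary : Matrix ι ι ℂ)
  else 0

/-- Trace norm ‖M‖₁ = Tr √(M†M). -/
def traceNorm {ι : Type*} [Fintype ι] [DecidableEq ι] (M : Matrix ι ι ℂ) : ℝ :=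
  ((psdSqrt (Mᴴ * M)).trace).re

/-- Trace distance D(ρ,σ) = ‖ρ−σ‖₁/2. -/
def traceDist {ι : Type*} [Fintype ι] [DecidableEq ι] (ρ σ : Matrix ι ι ℂ) : ℝ :=
  traceNorm (ρ - σ) / 2

/-- Fidelity F(ρ,σ) = ‖√ρ√σ‖₁. -/
def fidelity {ι : Type*} [Fintype ι] [DecidableEq ι] (ρ σ : Matrix ι ι ℂ) : ℝ :=
  traceNorm (psdSqrt ρ * psdSqrt σ)

/-- ω = exp(2πi/d). -/
def omega (d : ℕ) : ℂ := Complex.exp (2 * Real.pi * Complex.I / d)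

/-- Conjugate (X) basis vector |x̃⟩ of ℂ^d, component at z: ω^{−xz}/√d. -/
def xVec (d : ℕ) (x z : Fin d) : ℂ :=
  (starRingEnd ℂ) (omega d ^ (x.val * z.val)) / (Real.sqrt d : ℂ)

/-- Component of (⟨x̃|⊗1_{BR})|ψ⟩. -/
def condVecX {d : ℕ} {β r : Type*} [Fintype β] [Fintype r]
    (ψ : Fin d × β × r → ℂ) (x : Fin d) (p : β × r) : ℂ :=
  ∑ z, (starRingEnd ℂ) (xVec d x z) * ψ (z, p.1, p.2)

/-- Unnormalized conditional state ϑ_x^R = Tr_B[(⟨x̃|⊗1)|ψ⟩⟨ψ|(|x̃⟩⊗1)]. -/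
def thetaR {d : ℕ} {β r : Type*} [Fintype β] [Fintype r]
    (ψ : Fin d × β × r → ℂ) (x : Fin d) : Matrix r r ℂ :=
  Matrix.of fun s s' => ∑ b, condVecX ψ x (b, s) * (starRingEnd ℂ) (condVecX ψ x (b, s'))

/-- X-measured cq marginal ψ̄_X^{AR} = ∑_x |x̃⟩⟨x̃| ⊗ ϑ_x^R. -/
def cqMarginalX {d : ℕ} {β r : Type*} [Fintype β] [Fintype r]
    (ψ : Fin d × β × r → ℂ) : Matrix (Fin d × r) (Fin d × r) ℂ :=
  Matrix.of fun p q =>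
    ∑ x, xVec d x p.1 * (starRingEnd ℂ) (xVec d x q.1) * thetaR ψ x p.2 q.2

/-- Reduced state ψ^R = Tr_{AB}|ψ⟩⟨ψ|. -/
def reducedR {α β r : Type*} [Fintype α] [Fintype β] [Fintype r]
    (ψ : α × β × r → ℂ) : Matrix r r ℂ :=
  Matrix.of fun s s' => ∑ z, ∑ b, ψ (z, b, s) * (starRingEnd ℂ) (ψ (z, b, s'))

/-- The ideal key state (1/d) 1_A ⊗ ψ^R. -/
def idealKey {d : ℕ} {β r : Type*} [Fintype β] [Fintype r]
    (ψ : Fin d × β × r → ℂ) : Matrix (Fin d × r) (Fin d × r) ℂ :=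
  Matrix.of fun p q => (if p.1 = q.1 then ((d : ℂ))⁻¹ else 0) * reducedR ψ p.2 q.2

/-- Security parameter p_secure(X^A|R) = D(ψ̄_X^{AR}, (1/d)1⊗ψ^R). -/
def pSecure {d : ℕ} {β r : Type*} [Fintype β] [DecidableEq β] [Fintype r] [DecidableEq r]
    (ψ : Fin d × β × r → ℂ) : ℝ :=
  traceDist (cqMarginalX ψ) (idealKey ψ)

/-- Guessing probability ∑_z ⟨ψ|(|z⟩⟨z| ⊗ Λ_z ⊗ 1_R)|ψ⟩. -/
def pGuess {d : ℕ} {β r : Type*} [Fintype β] [Fintype r]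
    (ψ : Fin d × β × r → ℂ) (Λ : Fin d → Matrix β β ℂ) : ℝ :=
  (∑ z, ∑ b, ∑ b', ∑ s, (starRingEnd ℂ) (ψ (z, b, s)) * Λ z b b' * ψ (z, b', s)).re

end

/-!
Summing `⟨v, (1 - Λ z) v⟩ ≥ 0` over the `B`-components `v` of `ψ`, perfect guessing forces every
term to vanish, so `Λ z` fixes the components labelled `z`. As `Λ z + Λ w ≤ 1` for `z ≠ w`, the
effect `Λ w` then kills them, and therefore components with different labels are orthogonal. In
`Tr_B` of the state conditioned on `X = x` only the diagonal terms `z = w` survive, and there the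
phases of `⟨x̃|z⟩` cancel: what remains is `ψ^R / d`, independently of `x`.
-/

open scoped MatrixOrder

section Effects

variable {𝕜 n : Type*} [RCLike 𝕜] [Fintype n] [DecidableEq n]

theorem dotProduct_mulVec_le_dotProduct_self {E : Matrix n n 𝕜} (hE : E ≤ 1) (v : n → 𝕜) :
    star v ⬝ᵥ (E *ᵥ v) ≤ star v ⬝ᵥ v := by
  simpa only [sub_mulVec, one_mulVec, dotProduct_sub, sub_nonneg] using
    (Matrix.le_iff.1 hE).dotProduct_mulVec_nonneg v

theorem mulVec_eq_self_of_dotProduct_mulVec_eq {E : Matrix n n 𝕜} (hE : E ≤ 1) {v : n → 𝕜}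
    (h : star v ⬝ᵥ (E *ᵥ v) = star v ⬝ᵥ v) : E *ᵥ v = v := by
  have hcompl : (1 - E) *ᵥ v = 0 :=
    ((Matrix.le_iff.1 hE).dotProduct_mulVec_zero_iff v).1 <| by
      rw [sub_mulVec, one_mulVec, dotProduct_sub, h, sub_self]
  rw [sub_mulVec, one_mulVec, sub_eq_zero] at hcompl
  exact hcompl.symm

theorem mulVec_eq_self_of_sum_dotProduct_mulVec_eq {κ : Type*} [Fintype κ]
    {E : κ → Matrix n n 𝕜} (hE : ∀ k, E k ≤ 1) {v : κ → n → 𝕜}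
    (h : ∑ k, star (v k) ⬝ᵥ (E k *ᵥ v k) = ∑ k, star (v k) ⬝ᵥ v k) (k : κ) :
    E k *ᵥ v k = v k :=
  mulVec_eq_self_of_dotProduct_mulVec_eq (hE k) <|
    (Finset.sum_eq_sum_iff_of_le fun k _ => dotProduct_mulVec_le_dotProduct_self (hE k) (v k)).1
      h k (Finset.mem_univ k)

theorem mulVec_eq_zero_of_add_le_one {E F : Matrix n n 𝕜} (hF : 0 ≤ F) (hEF : E + F ≤ 1)
    {v : n → 𝕜} (hv : E *ᵥ v = v) : F *ᵥ v = 0 := by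
  have hle : star v ⬝ᵥ v + star v ⬝ᵥ (F *ᵥ v) ≤ star v ⬝ᵥ v := by
    simpa only [add_mulVec, hv, dotProduct_add] using dotProduct_mulVec_le_dotProduct_self hEF v
  exact (hF.posSemidef.dotProduct_mulVec_zero_iff v).1 <|
    le_antisymm (add_le_iff_nonpos_right _ |>.1 hle) (hF.posSemidef.dotProduct_mulVec_nonneg v)

theorem dotProduct_star_eq_zero_of_add_le_one {E F : Matrix n n 𝕜} (hF : 0 ≤ F)
    (hEF : E + F ≤ 1) {u v : n → 𝕜} (hu : E *ᵥ u = u) (hv : F *ᵥ v = v) : u ⬝ᵥ star v = 0 :=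
  calc u ⬝ᵥ star v = star (F *ᵥ v) ⬝ᵥ u := by rw [hv, dotProduct_comm]
    _ = star v ⬝ᵥ (F *ᵥ u) := by
      rw [star_mulVec, hF.posSemidef.isHermitian.eq, dotProduct_mulVec]
    _ = 0 := by rw [mulVec_eq_zero_of_add_le_one hF hEF hu, dotProduct_zero]

end Effects

section Fourier

theorem sum_pow_mul_inv_pow_of_isPrimitiveRoot {K : Type*} [Field K] {ζ : K} {d : ℕ}
    (hζ : IsPrimitiveRoot ζ d) (p q : Fin d) :
    ∑ x : Fin d, ζ ^ (x.val * p.val) * (ζ ^ (x.val * q.val))⁻¹ = if p = q then (d : K) else 0 := by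
  have hζ0 : ζ ≠ 0 := hζ.ne_zero (Fin.pos p).ne'
  split_ifs with hpq
  · simp [hpq, hζ0]
  · set ξ : K := ζ ^ p.val / ζ ^ q.val with hξ
    have hξ_pow : ξ ^ d = 1 := by
      rw [hξ, div_pow, pow_right_comm, pow_right_comm ζ q.val, hζ.pow_eq_one, one_pow, one_pow,
        div_one]
    have hξ_ne : ξ ≠ 1 := fun h =>
      hpq <| Fin.ext <| hζ.pow_inj p.2 q.2 <| (div_eq_one_iff_eq (pow_ne_zero _ hζ0)).1 h
    calc ∑ x : Fin d, ζ ^ (x.val * p.val) * (ζ ^ (x.val * q.val))⁻¹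
        = ∑ x : Fin d, ξ ^ x.val := by
          refine Finset.sum_congr rfl fun x _ => ?_
          rw [hξ, div_pow, ← pow_mul, ← pow_mul, mul_comm p.val, mul_comm q.val, div_eq_mul_inv]
      _ = (ξ ^ d - 1) / (ξ - 1) := by
          rw [Fin.sum_univ_eq_sum_range (ξ ^ ·) d, geom_sum_eq hξ_ne]
      _ = 0 := by rw [hξ_pow, sub_self, zero_div]

variable {d : ℕ}

theorem isPrimitiveRoot_omega (hd : d ≠ 0) : IsPrimitiveRoot (omega d) d :=
  Complex.isPrimitiveRoot_exp d hd

theorem norm_omega (hd : d ≠ 0) : ‖omega d‖ = 1 :=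
  (isPrimitiveRoot_omega hd).norm'_eq_one hd

theorem xVec_mul_conj_xVec (x p q : Fin d) :
    xVec d x p * (starRingEnd ℂ) (xVec d x q) =
      omega d ^ (x.val * q.val) * (omega d ^ (x.val * p.val))⁻¹ / d := by
  have hconj : (starRingEnd ℂ) (omega d) = (omega d)⁻¹ :=
    (Complex.inv_eq_conj (norm_omega (Fin.pos x).ne')).symm
  have hsqrt : (Real.sqrt d : ℂ) * (Real.sqrt d : ℂ) = d := by
    rw [← Complex.ofReal_mul, Real.mul_self_sqrt d.cast_nonneg, Complex.ofReal_natCast]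
  rw [xVec, xVec, map_div₀, Complex.conj_conj, Complex.conj_ofReal, map_pow, hconj, inv_pow,
    div_mul_div_comm, hsqrt, mul_comm (omega d ^ _)⁻¹]

theorem xVec_mul_conj_xVec_self (x z : Fin d) :
    xVec d x z * (starRingEnd ℂ) (xVec d x z) = (d : ℂ)⁻¹ := by
  have hω : omega d ≠ 0 := (isPrimitiveRoot_omega (Fin.pos x).ne').ne_zero (Fin.pos x).ne'
  rw [xVec_mul_conj_xVec, mul_inv_cancel₀ (pow_ne_zero _ hω), one_div]

theorem sum_xVec_mul_conj_xVec (p q : Fin d) :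
    ∑ x, xVec d x p * (starRingEnd ℂ) (xVec d x q) = if p = q then 1 else 0 := by
  have hd : d ≠ 0 := (Fin.pos p).ne'
  simp_rw [xVec_mul_conj_xVec, ← Finset.sum_div,
    sum_pow_mul_inv_pow_of_isPrimitiveRoot (isPrimitiveRoot_omega hd) q p, eq_comm (a := q)]
  split_ifs <;> simp [hd]

end Fourier

theorem sum_smul_dotProduct_star_sum_smul {R ι n : Type*} [CommSemiring R] [StarRing R]
    [Fintype ι] [Fintype n] (a c : ι → R) {u v : ι → n → R}
    (horth : Pairwise fun i j => u i ⬝ᵥ star (v j) = 0) :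
    (∑ i, a i • u i) ⬝ᵥ star (∑ j, c j • v j) =
      ∑ i, a i * star (c i) * (u i ⬝ᵥ star (v i)) := by
  simp only [star_sum, star_smul, sum_dotProduct, dotProduct_sum, smul_dotProduct, dotProduct_smul,
    smul_eq_mul]
  refine Finset.sum_congr rfl fun i _ => ?_
  rw [Finset.sum_eq_single_of_mem i (Finset.mem_univ i) fun j _ hj => by
    rw [horth hj, mul_zero]]
  ring

/-- The unnormalised vector `(⟨z| ⊗ 1_B ⊗ ⟨s|) ψ` of system `B`, for basis labels `z` of `A` and
`s` of `R`. -/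
def componentB {α β r : Type*} (ψ : α × β × r → ℂ) (z : α) (s : r) : β → ℂ :=
  fun b => ψ (z, b, s)

section Components

variable {α β r : Type*} [Fintype α] [Fintype β] [Fintype r]

theorem sum_star_componentB_dotProduct_self (ψ : α × β × r → ℂ) :
    ∑ p : α × r, star (componentB ψ p.1 p.2) ⬝ᵥ componentB ψ p.1 p.2 =
      ((∑ t, ‖ψ t‖ ^ 2 : ℝ) : ℂ) := by
  simp only [Fintype.sum_prod_type, componentB, dotProduct, Pi.star_apply, RCLike.star_def,
    Complex.conj_mul', Complex.ofReal_sum, Complex.ofReal_pow]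
  exact Finset.sum_congr rfl fun z _ => Finset.sum_comm

theorem reducedR_apply_eq_sum_componentB (ψ : α × β × r → ℂ) (s s' : r) :
    reducedR ψ s s' = ∑ z, componentB ψ z s ⬝ᵥ star (componentB ψ z s') :=
  rfl

theorem trace_reducedR (ψ : α × β × r → ℂ) :
    (reducedR ψ).trace = ((∑ t, ‖ψ t‖ ^ 2 : ℝ) : ℂ) := by
  rw [← sum_star_componentB_dotProduct_self, Fintype.sum_prod_type_right]
  simp only [trace, diag_apply, reducedR_apply_eq_sum_componentB, dotProduct_comm]

variable {d : ℕ}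

theorem ofReal_pGuess (ψ : Fin d × β × r → ℂ) {Λ : Fin d → Matrix β β ℂ} (hΛ : ∀ z, 0 ≤ Λ z) :
    (pGuess ψ Λ : ℂ) =
      ∑ p : Fin d × r, star (componentB ψ p.1 p.2) ⬝ᵥ (Λ p.1 *ᵥ componentB ψ p.1 p.2) := by
  have hexpand : ∑ z, ∑ b, ∑ b', ∑ s, (starRingEnd ℂ) (ψ (z, b, s)) * Λ z b b' * ψ (z, b', s) =
      ∑ p : Fin d × r, star (componentB ψ p.1 p.2) ⬝ᵥ (Λ p.1 *ᵥ componentB ψ p.1 p.2) := by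
    simp only [Fintype.sum_prod_type, componentB, dotProduct, mulVec, Pi.star_apply,
      RCLike.star_def, Finset.mul_sum, mul_assoc]
    exact Finset.sum_congr rfl fun z _ =>
      (Finset.sum_congr rfl fun b _ => Finset.sum_comm).trans Finset.sum_comm
  have hnonneg : 0 ≤ ∑ p : Fin d × r,
      star (componentB ψ p.1 p.2) ⬝ᵥ (Λ p.1 *ᵥ componentB ψ p.1 p.2) :=
    Finset.sum_nonneg fun p _ => (hΛ p.1).posSemidef.dotProduct_mulVec_nonneg _
  rw [pGuess, hexpand]
  exact (Complex.eq_re_of_ofReal_le (r := 0) <| by rwa [Complex.ofReal_zero]).symm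

theorem condVecX_eq_sum_smul_componentB (ψ : Fin d × β × r → ℂ) (x : Fin d) (s : r) :
    (fun b => condVecX ψ x (b, s)) =
      ∑ z, (starRingEnd ℂ) (xVec d x z) • componentB ψ z s := by
  ext b
  simp only [condVecX, componentB, Finset.sum_apply, Pi.smul_apply, smul_eq_mul]

theorem trace_thetaR (ψ : Fin d × β × r → ℂ) (x : Fin d) :
    (thetaR ψ x).trace = ((∑ t, ‖condVecX ψ x t‖ ^ 2 : ℝ) : ℂ) := by
  simp only [trace, diag_apply, thetaR, of_apply, Complex.mul_conj', Fintype.sum_prod_type_right,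
    Complex.ofReal_sum, Complex.ofReal_pow]

end Components

section Decoupling

variable {d : ℕ} {β r : Type*} [Fintype β] [Fintype r] {ψ : Fin d × β × r → ℂ}

theorem componentB_orthogonal_of_pGuess_eq [DecidableEq β] {Λ : Fin d → Matrix β β ℂ}
    (hΛpos : ∀ z, 0 ≤ Λ z) (hΛsum : ∑ z, Λ z ≤ 1) (hguess : pGuess ψ Λ = ∑ t, ‖ψ t‖ ^ 2)
    (s s' : r) : Pairwise fun z w => componentB ψ z s ⬝ᵥ star (componentB ψ w s') = 0 := by
  have hle_one (z : Fin d) : Λ z ≤ 1 :=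
    (Finset.single_le_sum (fun w _ => hΛpos w) (Finset.mem_univ z)).trans hΛsum
  have hfix : ∀ p : Fin d × r, Λ p.1 *ᵥ componentB ψ p.1 p.2 = componentB ψ p.1 p.2 :=
    mulVec_eq_self_of_sum_dotProduct_mulVec_eq (fun p : Fin d × r => hle_one p.1) <| by
      rw [← ofReal_pGuess ψ hΛpos, hguess, sum_star_componentB_dotProduct_self]
  intro z w hzw
  have hadd_le_one : Λ z + Λ w ≤ 1 :=
    (Finset.add_le_sum (fun i _ => hΛpos i) (Finset.mem_univ z) (Finset.mem_univ w) hzw).trans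
      hΛsum
  exact dotProduct_star_eq_zero_of_add_le_one (hΛpos w) hadd_le_one (hfix (z, s)) (hfix (w, s'))

theorem thetaR_eq_inv_smul_reducedR
    (horth : ∀ s s', Pairwise fun z w => componentB ψ z s ⬝ᵥ star (componentB ψ w s') = 0)
    (x : Fin d) : thetaR ψ x = (d : ℂ)⁻¹ • reducedR ψ := by
  ext s s'
  calc thetaR ψ x s s'
      = (fun b => condVecX ψ x (b, s)) ⬝ᵥ star (fun b => condVecX ψ x (b, s')) := rfl
    _ = ∑ z, (starRingEnd ℂ) (xVec d x z) * star ((starRingEnd ℂ) (xVec d x z)) *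
          (componentB ψ z s ⬝ᵥ star (componentB ψ z s')) := by
        rw [condVecX_eq_sum_smul_componentB, condVecX_eq_sum_smul_componentB,
          sum_smul_dotProduct_star_sum_smul _ _ (horth s s')]
    _ = (d : ℂ)⁻¹ * reducedR ψ s s' := by
        simp only [RCLike.star_def, Complex.conj_conj, mul_comm _ (xVec d x _),
          xVec_mul_conj_xVec_self, reducedR_apply_eq_sum_componentB, Finset.mul_sum]

theorem cqMarginalX_eq_idealKey_of_thetaR_eq
    (h : ∀ x, thetaR ψ x = (d : ℂ)⁻¹ • reducedR ψ) : cqMarginalX ψ = idealKey ψ := by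
  ext p q
  simp only [cqMarginalX, idealKey, of_apply, h, Matrix.smul_apply, smul_eq_mul,
    ← Finset.sum_mul, sum_xVec_mul_conj_xVec, ite_mul, one_mul, zero_mul]

theorem sum_norm_sq_condVecX_of_thetaR_eq {x : Fin d}
    (h : thetaR ψ x = (d : ℂ)⁻¹ • reducedR ψ) :
    ∑ t, ‖condVecX ψ x t‖ ^ 2 = (∑ t, ‖ψ t‖ ^ 2) / d := by
  have htrace := congrArg trace h
  rw [trace_smul, trace_thetaR, trace_reducedR, smul_eq_mul, inv_mul_eq_div] at htrace
  exact_mod_cast htrace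

end Decoupling

theorem perfect_recovery_implies_perfect_key_general {d : ℕ}
    {β r : Type*} [Fintype β] [DecidableEq β] [Fintype r]
    (ψ : Fin d × β × r → ℂ) (Λ : Fin d → Matrix β β ℂ)
    (hΛpos : ∀ z, (Λ z).PosSemidef) (hΛsum : ∑ z, Λ z ≤ 1)
    (hguess : pGuess ψ Λ = ∑ t, ‖ψ t‖ ^ 2) :
    cqMarginalX ψ = idealKey ψ ∧
      ∀ x : Fin d, ∑ t : β × r, ‖condVecX ψ x t‖ ^ 2 = (∑ t, ‖ψ t‖ ^ 2) / d := by
  have htheta := thetaR_eq_inv_smul_reducedR <|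
    componentB_orthogonal_of_pGuess_eq (fun z => (hΛpos z).nonneg) hΛsum hguess
  exact ⟨cqMarginalX_eq_idealKey_of_thetaR_eq htheta,
    fun x => sum_norm_sq_condVecX_of_thetaR_eq (htheta x)⟩

/-- Perfect recoverability of Z^A from B implies that the X-measured cq marginal
is exactly the ideal key state, and each X-outcome has probability 1/d. -/
theorem perfect_recovery_implies_perfect_key {d : ℕ} (hd : 1 ≤ d)
    {β r : Type*} [Fintype β] [DecidableEq β] [Fintype r] [DecidableEq r]
    (ψ : Fin d × β × r → ℂ) (hψ : ∑ t, ‖ψ t‖ ^ 2 = 1)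
    (Λ : Fin d → Matrix β β ℂ)
    (hΛpos : ∀ z, (Λ z).PosSemidef) (hΛsum : ∑ z, Λ z = 1)
    (hguess : pGuess ψ Λ = 1) :
    cqMarginalX ψ = idealKey ψ ∧
      ∀ x : Fin d, ∑ t : β × r, ‖condVecX ψ x t‖ ^ 2 = 1 / d := by
  simpa only [hψ] using perfect_recovery_implies_perfect_key_general ψ Λ hΛpos hΛsum.le
    (hguess.trans hψ.symm)
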